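/- arXiv:math-ph/0610053 — 2 statements merged into one kernel-verified Lean document; each statement's English description precedes it below -/
import Mathlib

section
/- (Getzler identity) In the endomorphism operad of a K-module L, for all homogeneous h, f, g the associator of the total composition satisfies (h • f) • g − h • (f • g) = {h, f, g} + (−1)^{|f||g|} {h, g, f}. -/
/-!
Expand `(h • f) • g` as the double sum of `(h ∘ᵢ f) ∘ⱼ g` over `i < p` and `j < p + m - 1`, and
split it according to the place where `g` is inserted.

* If `i ≤ j < i + m`, then `g` goes into an input of `f`, and `(h ∘ᵢ f) ∘ⱼ g = h ∘ᵢ (f ∘ⱼ₋ᵢ g)`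
  (`pcomp_seq`). By additivity of `h` in its `i`-th slot these terms add up to `h • (f • g)`.
* If `j ≥ i + m`, then `g` goes to the right of `f`, and these terms form `{h, f, g}`.
* If `j < i`, then `g` goes to the left of `f`, and
  `(h ∘ᵢ f) ∘ⱼ g = (-1)^{|f||g|} (h ∘ⱼ g) ∘ᵢ₊ₙ₋₁ f` (`pcomp_par`), so these terms form the
  remaining summand `(-1)^{|f||g|} {h, g, f}`.
-/

variable {K : Type*} [CommRing K] {L : Type*} [AddCommGroup L] [Module K L]

/-- `(-1)^z` for an integer exponent `z`. -/
def sgn (z : ℤ) : ℤ := (-1) ^ z.natAbs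

/-- The underlying function (on `ℕ`-indexed families of elements of `L`) of an
`n`-multilinear map `f ∈ Eⁿ`; equality of such functions is equivalent to equality
of the multilinear maps. -/
def toFn {n : ℕ} (f : MultilinearMap K (fun _ : Fin n => L) L) : (ℕ → L) → L :=
  fun x => f fun a => x a.val

/-- Partial composition `F ∘ᵢ G`, where `n` is the arity (degree) of `G`:
`(f ∘ᵢ g)(x_0, …) = (-1)^{i(n-1)} f(x_0, …, x_{i-1}, g(x_i, …, x_{i+n-1}), x_{i+n}, …)`. -/
def pcomp (i n : ℕ) (F G : (ℕ → L) → L) : (ℕ → L) → L :=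
  fun x => sgn ((i : ℤ) * ((n : ℤ) - 1)) •
    F fun k => if k < i then x k else if k = i then G (fun j => x (i + j)) else x (k + n - 1)

/-- Total composition `F • G := Σ_{i=0}^{m-1} F ∘ᵢ G`, where `m, n` are the arities of `F, G`. -/
def tcomp (m n : ℕ) (F G : (ℕ → L) → L) : (ℕ → L) → L :=
  ∑ i ∈ Finset.range m, pcomp i n F G

/-- Gerstenhaber tribraces `{H, F, G} := Σ_{i=0}^{|H|-1} Σ_{j=i+m}^{|F|+|H|} (H ∘ᵢ F) ∘ⱼ G`
for arities `p, m, n` of `H, F, G`. -/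
def triFn (p m n : ℕ) (H F G : (ℕ → L) → L) : (ℕ → L) → L :=
  ∑ i ∈ Finset.range (p - 1), ∑ j ∈ Finset.Icc (i + m) (m + p - 2), pcomp j n (pcomp i m H F) G

theorem sgn_eq_ite (z : ℤ) : sgn z = if Even z then 1 else -1 := by
  unfold sgn
  split_ifs with hz
  · exact Even.neg_one_pow (Int.natAbs_even.2 hz)
  · exact Odd.neg_one_pow (Int.natAbs_odd.2 (Int.not_even_iff_odd.1 hz))

theorem sgn_mul_sgn (a b : ℤ) : sgn a * sgn b = sgn (a + b) := by
  simp only [sgn_eq_ite, Int.even_add]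
  by_cases ha : Even a <;> by_cases hb : Even b <;> simp [ha, hb]

theorem sgn_congr {a b : ℤ} (c : ℤ) (hab : a = b + 2 * c) : sgn a = sgn b := by
  simp [sgn_eq_ite, hab, Int.even_add]

/-- The value of `toFn h`, as a function of the entry in slot `i`, is given by a linear map; `A` and
`B` supply the entries before and after that slot. -/
theorem toFn_slot {p : ℕ} (h : MultilinearMap K (fun _ : Fin p => L) L) {i : ℕ} (hi : i < p)
    (A B : ℕ → L) : ∃ φ : L →ₗ[K] L, ∀ v : L,
      toFn h (fun k => if k < i then A k else if k = i then v else B k) = φ v := by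
  refine ⟨h.toLinearMap (fun a => if a.val < i then A a else B a) ⟨i, hi⟩, fun v => ?_⟩
  simp only [toFn, MultilinearMap.toLinearMap_apply]
  congr 1
  funext a
  by_cases ha : a = ⟨i, hi⟩
  · subst ha
    simp
  · have : a.val ≠ i := fun h' => ha (Fin.ext h')
    simp [Function.update_of_ne ha, this]

theorem pcomp_sum_left {ι : Type*} (s : Finset ι) (j n : ℕ) (F : ι → (ℕ → L) → L)
    (G : (ℕ → L) → L) : pcomp j n (∑ i ∈ s, F i) G = ∑ i ∈ s, pcomp j n (F i) G := by
  funext x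
  simp [pcomp, Finset.sum_apply, Finset.smul_sum]

theorem pcomp_sum_right {p : ℕ} (h : MultilinearMap K (fun _ : Fin p => L) L) {i : ℕ} (hi : i < p)
    {ι : Type*} (s : Finset ι) (n : ℕ) (G : ι → (ℕ → L) → L) :
    pcomp i n (toFn h) (∑ l ∈ s, G l) = ∑ l ∈ s, pcomp i n (toFn h) (G l) := by
  funext x
  obtain ⟨φ, hφ⟩ := toFn_slot h hi x (fun k => x (k + n - 1))
  simp only [pcomp, Finset.sum_apply, hφ, map_sum, Finset.smul_sum]

/-- Sequential composition: `g` is inserted into an input of `f`. -/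
theorem pcomp_seq {p m : ℕ} (n : ℕ) (h : MultilinearMap K (fun _ : Fin p => L) L)
    (F G : (ℕ → L) → L) {i l : ℕ} (hi : i < p) (hl : l < m) :
    pcomp (i + l) n (pcomp i m (toFn h) F) G =
      pcomp i (m + n - 1) (toFn h) (pcomp l n F G) := by
  funext x
  obtain ⟨φ, hφ⟩ := toFn_slot h hi x (fun k => x (k + (m + n - 1) - 1))
  simp only [pcomp, hφ, map_zsmul, smul_smul, sgn_mul_sgn]
  rw [← hφ]
  congr 1
  · refine sgn_congr 0 ?_
    push_cast [show 1 ≤ m + n by omega]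
    ring
  · congr 1
    funext k
    rcases lt_trichotomy k i with hk | hk | hk
    · simp [hk, show k < i + l by omega]
    · subst hk
      simp only [lt_irrefl, if_true, if_false]
      congr 1
      funext a
      simp only [Nat.add_lt_add_iff_left, Nat.add_left_cancel_iff, ← add_assoc]
      split_ifs
      · rfl
      · rfl
      · exact congrArg x (by omega)
    · simp only [show ¬ k < i by omega, show k ≠ i by omega, show ¬ k + m - 1 < i + l by omega,
        show k + m - 1 ≠ i + l by omega, if_false]
      exact congrArg x (by omega)

/-- Parallel composition: `f` and `g` occupy different slots of `H`, and exchanging the order of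
insertion costs the Koszul sign. -/
theorem pcomp_par {n : ℕ} (m : ℕ) (H F : (ℕ → L) → L)
    (g : MultilinearMap K (fun _ : Fin n => L) L) {i j : ℕ} (hij : j < i) :
    pcomp j n (pcomp i m H F) (toFn g) =
      sgn (((m : ℤ) - 1) * ((n : ℤ) - 1)) • pcomp (i + n - 1) m (pcomp j n H (toFn g)) F := by
  funext x
  simp only [pcomp, Pi.smul_apply, smul_smul, sgn_mul_sgn]
  congr 1
  · refine sgn_congr (-(((m : ℤ) - 1) * ((n : ℤ) - 1))) ?_
    push_cast [show 1 ≤ i + n by omega]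
    ring
  · congr 1
    funext k
    rcases lt_trichotomy k j with hk | hk | hk
    · simp [hk, show k < i by omega, show k < i + n - 1 by omega]
    · subst hk
      simp only [hij, lt_irrefl, if_true, if_false, toFn]
      congr 1
      funext a
      -- `g` reads only its first `n` arguments, all of which lie to the left of the entry of `F`
      have := a.isLt
      simp [show k + a.val < i + n - 1 by omega]
    · rcases lt_trichotomy k i with hk' | hk' | hk'
      · simp [hk', show ¬ k < j by omega, show k ≠ j by omega,
          show k + n - 1 < i + n - 1 by omega]
      · subst hk'
        simp only [lt_irrefl, show ¬ k < j by omega, show k ≠ j by omega, if_true, if_false]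
        congr 1
        funext a
        simp only [show ¬ k + a < j by omega, show k + a ≠ j by omega, if_false]
        exact congrArg x (by omega)
      · simp only [show ¬ k < i by omega, show k ≠ i by omega, show ¬ k < j by omega,
          show k ≠ j by omega, show ¬ k + m - 1 < j by omega, show k + m - 1 ≠ j by omega,
          show ¬ k + n - 1 < i + n - 1 by omega, show k + n - 1 ≠ i + n - 1 by omega, if_false]
        exact congrArg x (by omega)

/-- Getzler identity: in the endomorphism operad, the associator of the total composition
satisfies `(h • f) • g - h • (f • g) = {h, f, g} + (-1)^{|f||g|} {h, g, f}`. -/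
theorem endop_getzler {p m n : ℕ} (h : MultilinearMap K (fun _ : Fin p => L) L) (f : MultilinearMap K (fun _ : Fin m => L) L) (g : MultilinearMap K (fun _ : Fin n => L) L) :
    tcomp (p + m - 1) n (tcomp p m (toFn h) (toFn f)) (toFn g) -
        tcomp p (m + n - 1) (toFn h) (tcomp m n (toFn f) (toFn g)) =
      triFn p m n (toFn h) (toFn f) (toFn g) +
        sgn (((m : ℤ) - 1) * ((n : ℤ) - 1)) • triFn p n m (toFn h) (toFn g) (toFn f) := by
  set T : ℕ → ℕ → (ℕ → L) → L :=
    fun i j => pcomp j n (pcomp i m (toFn h) (toFn f)) (toFn g) with hT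
  have expand : tcomp (p + m - 1) n (tcomp p m (toFn h) (toFn f)) (toFn g) =
      ∑ i ∈ Finset.range p, ∑ j ∈ Finset.range (p + m - 1), T i j := by
    simp only [tcomp, pcomp_sum_left]
    exact Finset.sum_comm
  have split : ∀ i ∈ Finset.range p, ∑ j ∈ Finset.range (p + m - 1), T i j =
      ∑ j ∈ Finset.range i, T i j + ∑ l ∈ Finset.range m, T i (i + l) +
        ∑ j ∈ Finset.Ico (i + m) (p + m - 1), T i j := by
    intro i hi
    rw [Finset.mem_range] at hi
    rw [← Finset.sum_range_add, Finset.sum_range_add_sum_Ico _ (by omega)]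
  have inner : ∑ i ∈ Finset.range p, ∑ l ∈ Finset.range m, T i (i + l) =
      tcomp p (m + n - 1) (toFn h) (tcomp m n (toFn f) (toFn g)) := by
    refine Finset.sum_congr rfl fun i hi => ?_
    rw [Finset.mem_range] at hi
    rw [tcomp, pcomp_sum_right h hi]
    exact Finset.sum_congr rfl fun l hl => pcomp_seq n h _ _ hi (Finset.mem_range.1 hl)
  have right : ∑ i ∈ Finset.range p, ∑ j ∈ Finset.Ico (i + m) (p + m - 1), T i j =
      triFn p m n (toFn h) (toFn f) (toFn g) := by
    rcases p with _ | q
    · simp [triFn]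
    -- the last index `i = q` contributes an empty sum
    rw [Finset.sum_range_succ, Finset.Ico_eq_empty (by omega), Finset.sum_empty, add_zero]
    refine Finset.sum_congr rfl fun i hi => Finset.sum_congr ?_ fun _ _ => rfl
    rw [Finset.mem_range] at hi
    ext j
    simp only [Finset.mem_Ico, Finset.mem_Icc]
    omega
  have left : ∑ i ∈ Finset.range p, ∑ j ∈ Finset.range i, T i j =
      sgn (((m : ℤ) - 1) * ((n : ℤ) - 1)) • triFn p n m (toFn h) (toFn g) (toFn f) := by
    rw [Finset.sum_comm' (t' := Finset.range (p - 1)) (s' := fun j => Finset.Ico (j + 1) p)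
      (by intro i j; simp only [Finset.mem_range, Finset.mem_Ico]; omega), triFn, Finset.smul_sum]
    refine Finset.sum_congr rfl fun j hj => ?_
    rw [Finset.smul_sum]
    rw [Finset.mem_range] at hj
    refine Finset.sum_nbij' (fun i => i + n - 1) (fun k => k + 1 - n) ?_ ?_ ?_ ?_ ?_
    · intro i hi
      simp only [Finset.mem_Ico, Finset.mem_Icc] at hi ⊢
      omega
    · intro k hk
      simp only [Finset.mem_Ico, Finset.mem_Icc] at hk ⊢
      omega
    · intro i hi
      simp only [Finset.mem_Ico] at hi
      omega
    · intro k hk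
      simp only [Finset.mem_Icc] at hk
      omega
    · intro i hi
      exact pcomp_par m _ _ g (by simp only [Finset.mem_Ico] at hi; omega)
  rw [expand, Finset.sum_congr rfl split, Finset.sum_add_distrib, Finset.sum_add_distrib, inner,
    right, left]
  abel
end

section
/- In the endomorphism operad of a K-module L, the coboundary operator ∂f := [f, μ] is a right graded derivation of the Gerstenhaber bracket: for all homogeneous f, g one has ∂[f, g] = (−1)^{|g|} [∂f, g] + [f, ∂g]. -/
/-!
The identity is the graded Jacobi identity for the Gerstenhaber bracket with third argument `μ`,
and it follows from the fact that the total composition is a graded right pre-Lie product: the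
associator `(F • G) • H - F • (G • H)` is graded symmetric in `G` and `H` (`preLie`).

For the pre-Lie law, expand `(F • G) • H` into terms `(F ∘ᵢ G) ∘ₖ H`. Those with
`i ≤ k < i + deg G` plug `H` into `G`, and add up to `F • (G • H)` (`pcomp_nested`). In the others
`G` and `H` occupy different slots of `F`; `pcomp_parallel` matches the terms with `H` to the right
of `G` with those of `(F • H) • G` where `G` is to the left of `H`, up to the sign
`(-1)^{|G||H|}`. The three instances of the pre-Lie law with `f`, `g`, `μ` in the outer position,
combined with biadditivity of `•`, give the theorem.
-/

variable {K : Type*} [CommRing K] {L : Type*} [AddCommGroup L] [Module K L]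

/-- Gerstenhaber bracket `[F, G] := F • G - (-1)^{|F||G|} G • F` for arities `m, n` of `F, G`. -/
def gbr (m n : ℕ) (F G : (ℕ → L) → L) : (ℕ → L) → L :=
  tcomp m n F G - sgn (((m : ℤ) - 1) * ((n : ℤ) - 1)) • tcomp n m G F

/-- `F` is additive in each of its first `m` arguments. -/
def SlotAdditive (m : ℕ) (F : (ℕ → L) → L) : Prop :=
  ∀ i < m, ∀ x : ℕ → L, ∃ φ : L →+ L, ∀ a, F (fun k => if k = i then a else x k) = φ a

/-- `F` depends only on its first `n` arguments. -/
def DependsOnFirst (n : ℕ) (F : (ℕ → L) → L) : Prop :=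
  ∀ x y : ℕ → L, (∀ k < n, x k = y k) → F x = F y


theorem slotAdditive_toFn {m : ℕ} (f : MultilinearMap K (fun _ : Fin m => L) L) :
    SlotAdditive m (toFn f) := by
  intro i hi x
  refine ⟨(f.toLinearMap (fun a => x a.val) ⟨i, hi⟩).toAddMonoidHom, fun a => ?_⟩
  simp only [toFn, LinearMap.toAddMonoidHom_coe, MultilinearMap.toLinearMap_apply]
  congr 1
  funext k
  by_cases h : k = ⟨i, hi⟩
  · subst h; simp
  · have : k.val ≠ i := fun h' => h (Fin.ext h')
    simp [h, this]

theorem dependsOnFirst_toFn {n : ℕ} (g : MultilinearMap K (fun _ : Fin n => L) L) :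
    DependsOnFirst n (toFn g) := by
  intro x y h
  simp only [toFn]
  congr 1
  funext k
  exact h k k.isLt

/-! ### Signs -/

theorem sgn_eq (z : ℤ) : sgn z = ((Int.negOnePow z : ℤˣ) : ℤ) := by
  rcases Int.even_or_odd z with h | h
  · rw [Int.negOnePow_even z h, sgn, (Int.natAbs_even.2 h).neg_one_pow]; rfl
  · rw [Int.negOnePow_odd z h, sgn, (Int.natAbs_odd.2 h).neg_one_pow]; rfl

theorem sgn_add (a b : ℤ) : sgn (a + b) = sgn a * sgn b := by
  simp [sgn_eq, Int.negOnePow_add]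

theorem sgn_even {z : ℤ} (h : Even z) : sgn z = 1 := by
  rw [sgn, (Int.natAbs_even.2 h).neg_one_pow]

theorem sgn_mul_self (z : ℤ) : sgn z * sgn z = 1 := by
  rw [← sgn_add, sgn_even ⟨z, rfl⟩]

/-! ### Additivity of the compositions -/

/-- `F ↦ F ∘ᵢ G` is additive. -/
def pcompLeft (i n : ℕ) (G : (ℕ → L) → L) : ((ℕ → L) → L) →+ ((ℕ → L) → L) where
  toFun F := pcomp i n F G
  map_zero' := by funext x; simp [pcomp]
  map_add' F F' := by funext x; simp [pcomp]

/-- `F ↦ F • G` is additive. -/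
def tcompLeft (m n : ℕ) (G : (ℕ → L) → L) : ((ℕ → L) → L) →+ ((ℕ → L) → L) where
  toFun F := tcomp m n F G
  map_zero' := Finset.sum_eq_zero fun i _ => (pcompLeft i n G).map_zero
  map_add' F F' := by
    simp only [tcomp, ← Finset.sum_add_distrib]
    exact Finset.sum_congr rfl fun i _ => (pcompLeft i n G).map_add F F'

theorem exists_pcompRight {m : ℕ} {F : (ℕ → L) → L} (hF : SlotAdditive m F) {i : ℕ} (hi : i < m)
    (n : ℕ) : ∃ φ : ((ℕ → L) → L) →+ ((ℕ → L) → L), ∀ G, pcomp i n F G = φ G := by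
  choose φ hφ using hF i hi
  have key : ∀ G x, pcomp i n F G x = sgn ((i : ℤ) * ((n : ℤ) - 1)) •
      φ (fun k => if k < i then x k else x (k + n - 1)) (G fun j => x (i + j)) := by
    intro G x
    rw [← hφ, pcomp]
    congr 2
    funext k
    split_ifs <;> first | rfl | omega
  refine ⟨{ toFun := fun G => pcomp i n F G, map_zero' := ?_, map_add' := ?_ }, fun G => rfl⟩
  · funext x; simp [key]
  · intro G G'; funext x; simp [key]

theorem exists_tcompRight {m : ℕ} {F : (ℕ → L) → L} (hF : SlotAdditive m F)
    (n : ℕ) : ∃ φ : ((ℕ → L) → L) →+ ((ℕ → L) → L), ∀ G, tcomp m n F G = φ G := by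
  refine ⟨{ toFun := fun G => tcomp m n F G, map_zero' := ?_, map_add' := ?_ }, fun G => rfl⟩
  · refine Finset.sum_eq_zero fun i hi => ?_
    obtain ⟨φ, hφ⟩ := exists_pcompRight hF (Finset.mem_range.1 hi) n
    rw [hφ, map_zero]
  · intro G G'
    simp only [tcomp, ← Finset.sum_add_distrib]
    refine Finset.sum_congr rfl fun i hi => ?_
    obtain ⟨φ, hφ⟩ := exists_pcompRight hF (Finset.mem_range.1 hi) n
    simp only [hφ, map_add]

theorem tcomp_sub_zsmul_left (m n : ℕ) (F F' G : (ℕ → L) → L) (c : ℤ) :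
    tcomp m n (F - c • F') G = tcomp m n F G - c • tcomp m n F' G := by
  change tcompLeft m n G _ = tcompLeft m n G _ - c • tcompLeft m n G _
  rw [map_sub, map_zsmul]

theorem tcomp_sub_zsmul_right {m : ℕ} {F : (ℕ → L) → L} (hF : SlotAdditive m F) (n : ℕ)
    (G G' : (ℕ → L) → L) (c : ℤ) :
    tcomp m n F (G - c • G') = tcomp m n F G - c • tcomp m n F G' := by
  obtain ⟨φ, hφ⟩ := exists_tcompRight hF n
  simp only [hφ, map_sub, map_zsmul]

/-! ### Operad axioms and the pre-Lie law -/

/-- Nested composition: a slot of `F ∘ᵢ G` that belongs to `G`. -/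
theorem pcomp_nested {m n p i j : ℕ} {F : (ℕ → L) → L} (hF : SlotAdditive m F) (hi : i < m)
    (hj : j < n) (G H : (ℕ → L) → L) :
    pcomp (i + j) p (pcomp i n F G) H = pcomp i (n + p - 1) F (pcomp j p G H) := by
  have hc : ((n + p - 1 : ℕ) : ℤ) = n + p - 1 := by omega
  -- the sign of the inner composition passes through slot `i` of `F`
  obtain ⟨φ, hφ⟩ := exists_pcompRight hF hi (n + p - 1)
  have h1 : pcomp j p G H = sgn ((j : ℤ) * ((p : ℤ) - 1)) • fun x : ℕ → L =>
      G fun k => if k < j then x k else if k = j then H (fun l => x (j + l)) else x (k + p - 1) :=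
    rfl
  rw [h1, hφ, map_zsmul, ← hφ]
  funext x
  simp only [pcomp, Pi.smul_apply, smul_smul, ← sgn_add]
  congr 1
  · congr 1; rw [hc]; push_cast; ring
  · congr 1
    funext k
    rcases lt_trichotomy k i with h | h | h
    · simp [h, show k < i + j by omega]
    · subst h
      simp only [lt_irrefl, if_true, if_false]
      congr 1
      funext l
      rcases lt_trichotomy l j with h' | h' | h'
      · simp [h']
      · subst h'; simp [add_assoc]
      · rw [if_neg (by omega), if_neg (by omega), if_neg (by omega), if_neg (by omega)]
        congr 1; omega
    · rw [if_neg (by omega), if_neg (by omega), if_neg (by omega), if_neg (by omega),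
        if_neg (by omega), if_neg (by omega)]
      congr 1; omega

/-- Parallel composition: `G` in slot `i` and `H` in a later slot `j` of `F`. -/
theorem pcomp_parallel {n p i j : ℕ} {G : (ℕ → L) → L} (hG : DependsOnFirst n G) (hij : i < j)
    (F H : (ℕ → L) → L) :
    pcomp (j + n - 1) p (pcomp i n F G) H =
      sgn (((n : ℤ) - 1) * ((p : ℤ) - 1)) • pcomp i n (pcomp j p F H) G := by
  have hc : ((j + n - 1 : ℕ) : ℤ) = j + n - 1 := by omega
  funext x
  simp only [pcomp, Pi.smul_apply, smul_smul, ← sgn_add]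
  congr 1
  · congr 1; rw [hc]; ring
  · congr 1
    funext k
    rcases lt_trichotomy k i with h | h | h
    · rw [if_pos h, if_pos (by omega), if_pos (by omega), if_pos h]
    · subst h
      rw [if_neg (by omega), if_pos rfl, if_pos hij, if_neg (by omega), if_pos rfl]
      exact hG _ _ fun l hl => by rw [if_pos (by omega)]
    · rw [if_neg (by omega), if_neg (by omega)]
      rcases lt_trichotomy k j with h' | h' | h'
      · rw [if_pos (by omega), if_pos h', if_neg (by omega), if_neg (by omega)]
      · subst h'
        rw [if_neg (by omega), if_pos rfl, if_neg (by omega), if_pos rfl]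
        congr 1
        funext l
        rw [if_neg (by omega), if_neg (by omega)]
        congr 1; omega
      · rw [if_neg (by omega), if_neg (by omega), if_neg (by omega), if_neg (by omega),
          if_neg (by omega), if_neg (by omega)]
        congr 1; omega

/-- The part of `(F • G) • H` in which `H` is inserted into a slot of `F` to the left of `G`. -/
def leftPart (m n p : ℕ) (F G H : (ℕ → L) → L) : (ℕ → L) → L :=
  ∑ i ∈ Finset.range m, ∑ k ∈ Finset.range i, pcomp k p (pcomp i n F G) H

/-- The associator of `•` is a manifestly graded symmetric sum over pairs of slots of `F`. -/
theorem associator_eq {m n p : ℕ} {F G : (ℕ → L) → L} (hF : SlotAdditive m F)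
    (hG : DependsOnFirst n G) (H : (ℕ → L) → L) :
    tcomp (m + n - 1) p (tcomp m n F G) H = tcomp m (n + p - 1) F (tcomp n p G H) +
      (leftPart m n p F G H +
        sgn (((n : ℤ) - 1) * ((p : ℤ) - 1)) • leftPart m p n F H G) := by
  have hL : tcomp (m + n - 1) p (tcomp m n F G) H =
      ∑ i ∈ Finset.range m, ∑ k ∈ Finset.range (m + n - 1), pcomp k p (pcomp i n F G) H := by
    change tcompLeft _ _ _ (∑ i ∈ Finset.range m, pcomp i n F G) = _
    rw [map_sum]; rfl
  have hR : tcomp m (n + p - 1) F (tcomp n p G H) =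
      ∑ i ∈ Finset.range m, ∑ j ∈ Finset.range n, pcomp (i + j) p (pcomp i n F G) H := by
    refine Finset.sum_congr rfl fun i hi => ?_
    have hi := Finset.mem_range.1 hi
    obtain ⟨φ, hφ⟩ := exists_pcompRight hF hi (n + p - 1)
    rw [hφ, tcomp, map_sum]
    refine Finset.sum_congr rfl fun j hj => ?_
    rw [pcomp_nested hF hi (Finset.mem_range.1 hj), hφ]
  have hS : leftPart m p n F H G = ∑ i ∈ Finset.range m, ∑ j ∈ Finset.Ico (i + 1) m,
      pcomp i n (pcomp j p F H) G := by
    refine Finset.sum_comm' fun i j => ?_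
    simp only [Finset.mem_range, Finset.mem_Ico]
    omega
  rw [hL, hR, hS, leftPart, Finset.smul_sum, ← Finset.sum_add_distrib, ← Finset.sum_add_distrib]
  refine Finset.sum_congr rfl fun i hi => ?_
  have hi := Finset.mem_range.1 hi
  rw [show m + n - 1 = i + (n + (m - (i + 1))) by omega, Finset.sum_range_add,
    Finset.sum_range_add, Finset.smul_sum, Finset.sum_Ico_eq_sum_range]
  have : ∀ l, pcomp (i + (n + l)) p (pcomp i n F G) H =
      sgn (((n : ℤ) - 1) * ((p : ℤ) - 1)) • pcomp i n (pcomp (i + 1 + l) p F H) G := by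
    intro l
    rw [← pcomp_parallel hG (by omega)]
    congr 1; omega
  simp only [this]
  abel

/-- The graded right pre-Lie law for the total composition. -/
theorem preLie {m n p : ℕ} {F G H : (ℕ → L) → L} (hF : SlotAdditive m F)
    (hG : DependsOnFirst n G) (hH : DependsOnFirst p H) :
    tcomp (m + n - 1) p (tcomp m n F G) H = tcomp m (n + p - 1) F (tcomp n p G H) +
      sgn (((n : ℤ) - 1) * ((p : ℤ) - 1)) • (tcomp (m + p - 1) n (tcomp m p F H) G -
        tcomp m (p + n - 1) F (tcomp p n H G)) := by
  rw [associator_eq hF hG, associator_eq hF hH, add_sub_cancel_left, smul_add, smul_smul,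
    mul_comm ((p : ℤ) - 1), sgn_mul_self, one_smul, add_comm (leftPart m n p F G H)]

/-- In the endomorphism operad, the coboundary operator `∂f := [f, μ]` is a right graded
derivation of the Gerstenhaber bracket: `∂[f, g] = (-1)^{|g|} [∂f, g] + [f, ∂g]`. -/
theorem endop_coboundary_derivation_bracket {m n : ℕ} (μ : MultilinearMap K (fun _ : Fin 2 => L) L)
    (f : MultilinearMap K (fun _ : Fin m => L) L) (g : MultilinearMap K (fun _ : Fin n => L) L) :
    gbr (m + n - 1) 2 (gbr m n (toFn f) (toFn g)) (toFn μ) =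
      sgn ((n : ℤ) - 1) • gbr (m + 1) n (gbr m 2 (toFn f) (toFn μ)) (toFn g) +
        gbr m (n + 1) (toFn f) (gbr n 2 (toFn g) (toFn μ)) := by
  have af := slotAdditive_toFn f
  have ag := slotAdditive_toFn g
  have aμ := slotAdditive_toFn μ
  have df := dependsOnFirst_toFn f
  have dg := dependsOnFirst_toFn g
  have dμ := dependsOnFirst_toFn μ
  generalize toFn f = F at *
  generalize toFn g = G at *
  generalize toFn μ = M at *
  have hf := preLie af dg dμ
  have hg := preLie ag df dμ
  have hμ := preLie aμ df dg
  -- For `m = n = 0` the exponent is affected by truncated subtraction, but then `[F, G] = 0`.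
  have hs : sgn ((((m + n - 1 : ℕ) : ℤ) - 1) * (((2 : ℕ) : ℤ) - 1)) •
      tcomp 2 (m + n - 1) M (gbr m n F G) =
        sgn ((m : ℤ) + n) • tcomp 2 (m + n - 1) M (gbr m n F G) := by
    by_cases h : m + n = 0
    · obtain ⟨rfl, rfl⟩ : m = 0 ∧ n = 0 := by omega
      obtain ⟨φ, hφ⟩ := exists_tcompRight aμ (0 + 0 - 1)
      have : gbr 0 0 F G = 0 := by simp [gbr, tcomp]
      rw [this, hφ, map_zero, smul_zero, smul_zero]
    · congr 1
      rw [show (((m + n - 1 : ℕ) : ℤ) - 1) * (((2 : ℕ) : ℤ) - 1) = (m + n) + (-1 + -1) by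
        push_cast [show 1 ≤ m + n by omega]; ring, sgn_add, sgn_even ⟨-1, rfl⟩, mul_one]
  rw [gbr, hs]
  simp only [gbr, tcomp_sub_zsmul_left, tcomp_sub_zsmul_right af, tcomp_sub_zsmul_right ag,
    tcomp_sub_zsmul_right aμ]
  simp only [show n + m - 1 = m + n - 1 by omega, show 2 + m - 1 = m + 1 by omega,
    show 2 + n - 1 = n + 1 by omega, show m + 2 - 1 = m + 1 by omega,
    show n + 2 - 1 = n + 1 by omega] at hf hg hμ ⊢
  rw [hf, hg]
  -- every sign depends only on the parities of `m` and `n`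
  have parity : ∀ k : ℕ, (Odd k ∧ ¬Even k) ∨ (¬Odd k ∧ Even k) := fun k => by
    simpa using (Nat.even_or_odd k).symm
  obtain ⟨em, em'⟩ | ⟨em, em'⟩ := parity m <;> obtain ⟨en, en'⟩ | ⟨en, en'⟩ := parity n <;>
    simp [sgn_eq_ite, em, en, em', en', parity_simps] at hμ ⊢ <;> rw [hμ] <;> abel
end
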